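/- Let $F$ (firms) and $W$ (workers) be finite disjoint sets, $A=(a_{ij})_{(i,j)\in F\times W}$ a matrix of nonnegative reals, and $r_i\ge 0$ ($i\in F$) integer capacities. Assume that a firm that cannot hire generates no income, i.e. $a_{ij}=0$ for all $j\in W$ whenever $r_i=0$ (so there is no restriction if all capacities are positive). For $S\subseteq F$ and $T\subseteq W$ let $v_\gamma(S\cup T)$ be the maximum of $\sum_{(i,j)\in\mu}a_{ij}$ over all $\mu\subseteq S\times T$ in which each $i\in S$ appears in at most $r_i$ pairs and each $j\in T$ in at most one pair. Then the many-to-one assignment game $v_\gamma$ on $N=F\cup W$ associated with the market $\gamma=(F,W,A,r)$ is convex, i.e. $v_\gamma(S\cup\{k\})-v_\gamma(S)\le v_\gamma(T\cup\{k\})-v_\gamma(T)$ for all $k\in N$ and $S\subseteq T\subseteq N\setminus\{k\}$, if and only if no row or column of $A$ contains more positive entries than the capacity of the corresponding agent, i.e., for each firm $i\in F$ the number of workers $j$ with $a_{ij}>0$ is at most $r_i$, and for each worker $j\in W$ the number of firms $i$ with $a_{ij}>0$ is at most $1$. -/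

import Mathlib

/-- `μ` is a matching between the firms in `S` and the workers in `T`: its pairs lie in `S × T`,
each firm `i` appears in at most `r i` pairs and each worker in at most one pair. -/
def IsMatching {F W : Type*} [DecidableEq F] [DecidableEq W] (r : F → ℕ)
    (S : Finset F) (T : Finset W) (μ : Finset (F × W)) : Prop :=
  μ ⊆ S ×ˢ T ∧
  (∀ i ∈ S, (μ.filter fun p => p.1 = i).card ≤ r i) ∧
  (∀ j ∈ T, (μ.filter fun p => p.2 = j).card ≤ 1)

theorem isMatching_empty {F W : Type*} [DecidableEq F] [DecidableEq W] (r : F → ℕ)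
    (S : Finset F) (T : Finset W) : IsMatching r S T (∅ : Finset (F × W)) := by
  simp [IsMatching]

open scoped Classical in
/-- The (finite) set of matchings between the firms in `S` and the workers in `T`. -/
noncomputable def matchings {F W : Type*} [DecidableEq F] [DecidableEq W] (r : F → ℕ)
    (S : Finset F) (T : Finset W) : Finset (Finset (F × W)) :=
  (S ×ˢ T).powerset.filter fun μ => IsMatching r S T μ

theorem matchings_nonempty {F W : Type*} [DecidableEq F] [DecidableEq W] (r : F → ℕ)
    (S : Finset F) (T : Finset W) : (matchings r S T).Nonempty :=
  ⟨∅, by simp [matchings, isMatching_empty]⟩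

/-- The coalitional function of the many-to-one assignment game with player set `F ⊕ W`: the
worth of a coalition is the maximum value of a matching between its firms and its workers. -/
noncomputable def gameValue {F W : Type*} [DecidableEq F] [DecidableEq W]
    (A : Matrix F W ℝ) (r : F → ℕ) (C : Finset (F ⊕ W)) : ℝ :=
  (matchings r C.toLeft C.toRight).sup' (matchings_nonempty r C.toLeft C.toRight)
    fun μ => ∑ p ∈ μ, A p.1 p.2

/-- A coalitional game is convex if the marginal contribution of every player is monotone in
the coalition that the player joins. -/
def IsConvexGame {N : Type*} [DecidableEq N] (v : Finset N → ℝ) : Prop :=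
  ∀ (k : N) (S T : Finset N), S ⊆ T → k ∉ T →
    v (insert k S) - v S ≤ v (insert k T) - v T

/-!
A matching can never earn more than the sum of all positive entries available to it. In a convex
game marginal contributions only grow, so adding first workers to a single firm and then firms to
a set of workers shows that a coalition is worth at least the sum of the worths `(A i j)⁺` of its
firm-worker pairs. Hence a convex game realizes all positive entries in every coalition, which
means that these entries form a matching. Conversely, a game that realizes all positive entries is
a sum of nonnegative pairwise synergies, hence convex.
-/

theorem encard_setOf_le_iff_forall_card_filter_le {α : Type*} {p : α → Prop} [DecidablePred p]
    {n : ℕ} : {a | p a}.encard ≤ n ↔ ∀ s : Finset α, (s.filter p).card ≤ n := by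
  constructor
  · intro h s
    rw [← Nat.cast_le (α := ℕ∞), ← Set.encard_coe_eq_coe_finsetCard, Finset.coe_filter]
    exact (Set.encard_le_encard fun a ha => ha.2).trans h
  · intro h
    by_contra! hlt
    obtain ⟨t, htp, ht⟩ := Set.exists_subset_encard_eq (k := ((n + 1 : ℕ) : ℕ∞))
      (by simpa using Order.add_one_le_of_lt hlt)
    lift t to Finset α using Set.finite_of_encard_eq_coe ht
    rw [Set.encard_coe_eq_coe_finsetCard, Nat.cast_inj] at ht
    have hle : t.card ≤ n := Finset.filter_true_of_mem (p := p) (fun a ha => htp ha) ▸ h t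
    lia

section ConvexGame

variable {N F W : Type*} [DecidableEq N] [DecidableEq F] [DecidableEq W]

theorem IsConvexGame.sum_marginal_le {v : Finset N → ℝ} (hv : IsConvexGame v) (S T : Finset N) :
    ∑ k ∈ T, (v (insert k S) - v S) ≤ v (S ∪ T) - v S := by
  induction T using Finset.induction_on with
  | empty => simp
  | insert k T hkT ih =>
    rw [Finset.sum_insert hkT, Finset.union_insert]
    by_cases hkS : k ∈ S
    · simpa [hkS] using ih
    · have hmarginal := hv k S (S ∪ T) Finset.subset_union_left (by simp [hkS, hkT])
      linarith

theorem IsConvexGame.sum_pair_le {v : Finset (F ⊕ W) → ℝ} (hv : IsConvexGame v)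
    (hF : ∀ i : F, v {Sum.inl i} = 0) (hW : ∀ T : Finset W, v (T.map .inr) = 0)
    (S : Finset F) (T : Finset W) :
    ∑ p ∈ S ×ˢ T, v {Sum.inl p.1, Sum.inr p.2} ≤ v (S.disjSum T) :=
  calc ∑ p ∈ S ×ˢ T, v {Sum.inl p.1, Sum.inr p.2}
    _ = ∑ i ∈ S, ∑ k ∈ T.map .inr, (v (insert k {Sum.inl i}) - v {Sum.inl i}) := by
      simp [Finset.sum_product, hF, Finset.pair_comm]
    _ ≤ ∑ i ∈ S, (v ({Sum.inl i} ∪ T.map .inr) - v {Sum.inl i}) :=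
      Finset.sum_le_sum fun i _ => hv.sum_marginal_le {Sum.inl i} (T.map .inr)
    _ = ∑ k ∈ S.map .inl, (v (insert k (T.map .inr)) - v (T.map .inr)) := by
      simp [hF, hW, Finset.singleton_union]
    _ ≤ v (T.map .inr ∪ S.map .inl) - v (T.map .inr) := hv.sum_marginal_le _ _
    _ = v (S.disjSum T) := by
      rw [hW, sub_zero, Finset.union_comm, ← Finset.map_inl_disjUnion_map_inr,
        Finset.disjUnion_eq_union]

theorem isConvexGame_sum_product {B : F → W → ℝ} (hB : ∀ i j, 0 ≤ B i j) :
    IsConvexGame fun C : Finset (F ⊕ W) => ∑ p ∈ C.toLeft ×ˢ C.toRight, B p.1 p.2 := by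
  intro k S T hST hkT
  have hkS : k ∉ S := fun h => hkT (hST h)
  rcases k with i | j
  · simp only [Finset.toLeft_insert_inl, Finset.toRight_insert_inl, Finset.sum_product]
    rw [Finset.sum_insert (by simpa using hkS), Finset.sum_insert (by simpa using hkT),
      add_sub_cancel_right, add_sub_cancel_right]
    exact Finset.sum_le_sum_of_subset_of_nonneg (Finset.toRight_subset_toRight hST)
      fun j _ _ => hB i j
  · simp only [Finset.toLeft_insert_inr, Finset.toRight_insert_inr, Finset.sum_product_right]
    rw [Finset.sum_insert (by simpa using hkS), Finset.sum_insert (by simpa using hkT),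
      add_sub_cancel_right, add_sub_cancel_right]
    exact Finset.sum_le_sum_of_subset_of_nonneg (Finset.toLeft_subset_toLeft hST)
      fun i _ _ => hB i j

end ConvexGame

section PositiveEntries

variable {F W : Type*} {A : Matrix F W ℝ} {r : F → ℕ} {S : Finset F} {T : Finset W}

/-- The positions of the positive entries of the submatrix of `A` with rows `S` and columns `T`.
It is encoded as a set of pairs so that it can be compared with the matchings between `S` and
`T`. -/
noncomputable def positiveEntries (A : Matrix F W ℝ) (S : Finset F) (T : Finset W) :
    Finset (F × W) :=
  (S ×ˢ T).filter fun p => 0 < A p.1 p.2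

theorem mem_positiveEntries {p : F × W} :
    p ∈ positiveEntries A S T ↔ p ∈ S ×ˢ T ∧ 0 < A p.1 p.2 :=
  Finset.mem_filter

theorem sum_positiveEntries :
    ∑ p ∈ positiveEntries A S T, A p.1 p.2 = ∑ p ∈ S ×ˢ T, (A p.1 p.2)⁺ := by
  rw [positiveEntries, Finset.sum_filter]
  refine Finset.sum_congr rfl fun p _ => ?_
  split_ifs with hp
  · exact (posPart_of_nonneg hp.le).symm
  · exact (posPart_of_nonpos (not_lt.1 hp)).symm

theorem filter_fst_positiveEntries [DecidableEq F] {i : F} (hi : i ∈ S) :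
    (positiveEntries A S T).filter (fun p => p.1 = i) =
      {i} ×ˢ T.filter fun j => 0 < A i j := by
  ext ⟨a, b⟩
  simp only [Finset.mem_filter, mem_positiveEntries, Finset.mem_product, Finset.mem_singleton]
  grind

theorem filter_snd_positiveEntries [DecidableEq W] {j : W} (hj : j ∈ T) :
    (positiveEntries A S T).filter (fun p => p.2 = j) =
      (S.filter fun i => 0 < A i j) ×ˢ {j} := by
  ext ⟨a, b⟩
  simp only [Finset.mem_filter, mem_positiveEntries, Finset.mem_product, Finset.mem_singleton]
  grind

variable [DecidableEq F] [DecidableEq W]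

theorem IsMatching.mono {μ ν : Finset (F × W)} (hμ : IsMatching r S T μ) (hνμ : ν ⊆ μ) :
    IsMatching r S T ν :=
  ⟨hνμ.trans hμ.1,
    fun i hi => (Finset.card_le_card (Finset.filter_subset_filter _ hνμ)).trans (hμ.2.1 i hi),
    fun j hj => (Finset.card_le_card (Finset.filter_subset_filter _ hνμ)).trans (hμ.2.2 j hj)⟩

theorem isMatching_positiveEntries_iff :
    IsMatching r S T (positiveEntries A S T) ↔
      (∀ i ∈ S, (T.filter fun j => 0 < A i j).card ≤ r i) ∧
      (∀ j ∈ T, (S.filter fun i => 0 < A i j).card ≤ 1) := by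
  refine (and_iff_right (Finset.filter_subset _ _)).trans
    (and_congr (forall₂_congr fun i hi => ?_) (forall₂_congr fun j hj => ?_))
  · rw [filter_fst_positiveEntries hi, Finset.card_product, Finset.card_singleton, one_mul]
  · rw [filter_snd_positiveEntries hj, Finset.card_product, Finset.card_singleton, mul_one]

theorem forall_isMatching_positiveEntries_iff :
    (∀ S T, IsMatching r S T (positiveEntries A S T)) ↔
      (∀ i, {j | 0 < A i j}.encard ≤ r i) ∧ (∀ j, {i | 0 < A i j}.encard ≤ 1) := by
  simp only [← Nat.cast_one (R := ℕ∞), encard_setOf_le_iff_forall_card_filter_le,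
    isMatching_positiveEntries_iff]
  exact ⟨fun h => ⟨fun i T => (h {i} T).1 i (Finset.mem_singleton_self i),
      fun j S => (h S {j}).2 j (Finset.mem_singleton_self j)⟩,
    fun h S T => ⟨fun i _ => h.1 i T, fun j _ => h.2 j S⟩⟩

end PositiveEntries

section GameValue

variable {F W : Type*} [DecidableEq F] [DecidableEq W] {A : Matrix F W ℝ} {r : F → ℕ}
  {C : Finset (F ⊕ W)} {μ : Finset (F × W)}

theorem mem_matchings {S : Finset F} {T : Finset W} :
    μ ∈ matchings r S T ↔ IsMatching r S T μ := by
  simp only [matchings, Finset.mem_filter, Finset.mem_powerset]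
  exact and_iff_right_of_imp And.left

theorem IsMatching.sum_le_gameValue (hμ : IsMatching r C.toLeft C.toRight μ) :
    ∑ p ∈ μ, A p.1 p.2 ≤ gameValue A r C :=
  Finset.le_sup' (fun μ : Finset (F × W) => ∑ p ∈ μ, A p.1 p.2) (mem_matchings.2 hμ)

theorem exists_isMatching_sum_eq_gameValue (A : Matrix F W ℝ) (r : F → ℕ) (C : Finset (F ⊕ W)) :
    ∃ μ, IsMatching r C.toLeft C.toRight μ ∧ ∑ p ∈ μ, A p.1 p.2 = gameValue A r C := by
  obtain ⟨μ, hμ, hsum⟩ := Finset.exists_mem_eq_sup' (matchings_nonempty r C.toLeft C.toRight)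
    fun μ : Finset (F × W) => ∑ p ∈ μ, A p.1 p.2
  exact ⟨μ, mem_matchings.1 hμ, hsum.symm⟩

theorem gameValue_le_sum_posPart :
    gameValue A r C ≤ ∑ p ∈ C.toLeft ×ˢ C.toRight, (A p.1 p.2)⁺ := by
  obtain ⟨μ, hμ, hsum⟩ := exists_isMatching_sum_eq_gameValue A r C
  rw [← hsum]
  exact (Finset.sum_le_sum fun p _ => le_posPart _).trans
    (Finset.sum_le_sum_of_subset_of_nonneg hμ.1 fun p _ _ => posPart_nonneg _)

theorem gameValue_eq_sum_posPart_iff :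
    gameValue A r C = ∑ p ∈ C.toLeft ×ˢ C.toRight, (A p.1 p.2)⁺ ↔
      IsMatching r C.toLeft C.toRight (positiveEntries A C.toLeft C.toRight) := by
  constructor
  · intro hvalue
    obtain ⟨μ, hμ, hsum⟩ := exists_isMatching_sum_eq_gameValue A r C
    refine hμ.mono fun p hp => by_contra fun hpμ => ?_
    obtain ⟨hpC, hpos⟩ := mem_positiveEntries.1 hp
    refine (hsum.trans hvalue).not_lt ?_
    calc ∑ q ∈ μ, A q.1 q.2
      _ ≤ ∑ q ∈ μ, (A q.1 q.2)⁺ := Finset.sum_le_sum fun q _ => le_posPart _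
      _ < ∑ q ∈ C.toLeft ×ˢ C.toRight, (A q.1 q.2)⁺ :=
        Finset.sum_lt_sum_of_subset hμ.1 hpC hpμ (posPart_pos hpos) fun q _ _ => posPart_nonneg _
  · intro hmatching
    refine gameValue_le_sum_posPart.antisymm ?_
    rw [← sum_positiveEntries]
    exact hmatching.sum_le_gameValue

theorem gameValue_eq_zero (hC : C.toLeft = ∅ ∨ C.toRight = ∅) : gameValue A r C = 0 := by
  have hempty : C.toLeft ×ˢ C.toRight = ∅ := Finset.product_eq_empty.2 hC
  have hmatching : IsMatching r C.toLeft C.toRight (positiveEntries A C.toLeft C.toRight) := by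
    rw [positiveEntries, hempty, Finset.filter_empty]
    exact isMatching_empty r C.toLeft C.toRight
  rw [gameValue_eq_sum_posPart_iff.2 hmatching, hempty, Finset.sum_empty]

theorem gameValue_pair (hr : ∀ i, r i = 0 → ∀ j, A i j ≤ 0) (i : F) (j : W) :
    gameValue A r {Sum.inl i, Sum.inr j} = (A i j)⁺ := by
  have hleft : ({Sum.inl i, Sum.inr j} : Finset (F ⊕ W)).toLeft = {i} := by ext; simp
  have hright : ({Sum.inl i, Sum.inr j} : Finset (F ⊕ W)).toRight = {j} := by ext; simp
  have hmatching : IsMatching r {i} {j} (positiveEntries A {i} {j}) := by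
    simp only [isMatching_positiveEntries_iff, Finset.mem_singleton, forall_eq,
      Finset.filter_singleton]
    split_ifs with hpos
    · have hri : r i ≠ 0 := fun hri => (hr i hri j).not_gt hpos
      simpa using Nat.one_le_iff_ne_zero.2 hri
    · simp
  rw [gameValue_eq_sum_posPart_iff.2 (by rwa [hleft, hright]), hleft, hright,
    Finset.singleton_product_singleton, Finset.sum_singleton]

theorem isConvexGame_gameValue_iff (hr : ∀ i, r i = 0 → ∀ j, A i j ≤ 0) :
    IsConvexGame (gameValue A r) ↔
      ∀ C, gameValue A r C = ∑ p ∈ C.toLeft ×ˢ C.toRight, (A p.1 p.2)⁺ := by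
  constructor
  · intro hv C
    refine gameValue_le_sum_posPart.antisymm ?_
    have hpairs := hv.sum_pair_le (fun i => gameValue_eq_zero (.inr (by ext; simp)))
      (fun T => gameValue_eq_zero (.inl (by ext; simp))) C.toLeft C.toRight
    simpa only [gameValue_pair hr, Finset.toLeft_disjSum_toRight] using hpairs
  · intro hvalue
    rw [funext hvalue]
    exact isConvexGame_sum_product fun i j => posPart_nonneg (A i j)

end GameValue

theorem convex_iff_few_positive_entries_general {F W : Type*} [DecidableEq F] [DecidableEq W]
    (A : Matrix F W ℝ) (r : F → ℕ) (hr : ∀ i, r i = 0 → ∀ j, A i j ≤ 0) :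
    IsConvexGame (gameValue A r) ↔
      (∀ i, {j | 0 < A i j}.encard ≤ r i) ∧ (∀ j, {i | 0 < A i j}.encard ≤ 1) :=
  calc IsConvexGame (gameValue A r)
    _ ↔ ∀ C, gameValue A r C = ∑ p ∈ C.toLeft ×ˢ C.toRight, (A p.1 p.2)⁺ :=
      isConvexGame_gameValue_iff hr
    _ ↔ ∀ C : Finset (F ⊕ W),
          IsMatching r C.toLeft C.toRight (positiveEntries A C.toLeft C.toRight) :=
      forall_congr' fun _ => gameValue_eq_sum_posPart_iff
    _ ↔ ∀ S T, IsMatching r S T (positiveEntries A S T) :=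
      ⟨fun h S T => by simpa using h (S.disjSum T), fun h C => h C.toLeft C.toRight⟩
    _ ↔ (∀ i, {j | 0 < A i j}.encard ≤ r i) ∧ (∀ j, {i | 0 < A i j}.encard ≤ 1) :=
      forall_isMatching_positiveEntries_iff

theorem convex_iff_few_positive_entries {F W : Type*} [Fintype F] [Fintype W]
    [DecidableEq F] [DecidableEq W] (A : Matrix F W ℝ) (r : F → ℕ)
    (hA : ∀ i j, 0 ≤ A i j)
    (hr : ∀ i, r i = 0 → ∀ j, A i j = 0) :
    IsConvexGame (gameValue A r) ↔
      (∀ i : F, (Finset.univ.filter fun j : W => 0 < A i j).card ≤ r i) ∧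
      (∀ j : W, (Finset.univ.filter fun i : F => 0 < A i j).card ≤ 1) := by
  simpa [Set.encard_eq_coe_toFinset_card] using
    convex_iff_few_positive_entries_general A r fun i hi j => (hr i hi j).le
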